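/- Let κ be a partition with at most n parts. Let P_κ^{(q,t)} be the symmetric Macdonald polynomial with parameters (q,t), and let P_κ^{(q^{−1},t^{−1})} be the polynomial defined by the same conditions with q and t replaced by q^{−1} and t^{−1} throughout (in particular using the Cherednik operators built from q^{−1},t^{−1}, and eigenvalue Σ_i q^{−κ_i}t^{i−1}); assume both exist and are unique. Then P_κ^{(q^{−1},t^{−1})} = P_κ^{(q,t)}. -/

import Mathlib

/- STATEMENT 9: the symmetric Macdonald polynomial satisfies
P_κ^{(q⁻¹,t⁻¹)} = P_κ^{(q,t)}. -/

open Finset MvPolynomial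

namespace Stmt9

/-- leg colength l'_η(i) -/
def legCo (n : ℕ) (η : Fin n → ℕ) (i : Fin n) : ℕ :=
  (univ.filter fun k => k < i ∧ η i ≤ η k).card +
  (univ.filter fun k => i < k ∧ η i < η k).card

/-- leg length l(s) of the node s = (i,j) -/
def leg (n : ℕ) (η : Fin n → ℕ) (i : Fin n) (j : ℕ) : ℕ :=
  (univ.filter fun k => i < k ∧ j ≤ η k ∧ η k ≤ η i).card +
  (univ.filter fun k => k < i ∧ j ≤ η k + 1 ∧ η k + 1 ≤ η i).card

/-- The field K = ℚ(q,t). -/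
abbrev K : Type := FractionRing (MvPolynomial (Fin 2) ℚ)

noncomputable def q : K := algebraMap (MvPolynomial (Fin 2) ℚ) K (X 0)
noncomputable def t : K := algebraMap (MvPolynomial (Fin 2) ℚ) K (X 1)

/-- The polynomial ring K[x_1,…,x_n]. -/
abbrev P (n : ℕ) : Type := MvPolynomial (Fin n) K

/-- the automorphism s_k exchanging x_k and x_{k+1} (0-indexed; identity out of range) -/
noncomputable def sOp (n : ℕ) (k : ℕ) : P n →ₗ[K] P n :=
  if h : k + 1 < n then
    (rename (Equiv.swap (⟨k, Nat.lt_of_succ_lt h⟩ : Fin n) ⟨k + 1, h⟩)).toLinearMap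
  else LinearMap.id

/-- τ_1 : x_1 ↦ qv·x_1 (the first variable is 0-indexed) -/
noncomputable def tauOp (n : ℕ) (qv : K) : P n →ₗ[K] P n :=
  (aeval (fun j : Fin n => if (j : ℕ) = 0 then C qv * X j else X j)).toLinearMap

/-- ω := s_{n−1}⋯s_2 s_1 τ_1 -/
noncomputable def omegaOp (n : ℕ) (qv : K) : P n →ₗ[K] P n :=
  (List.range (n - 1)).foldl (fun acc k => sOp n k ∘ₗ acc) (tauOp n qv)

/-- The defining property of the Demazure–Lustig operators T_k (0-indexed), for the
parameter value tv: (x_k − x_{k+1})·(T_k f) = (x_k − x_{k+1})·tv·f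
+ (tv·x_k − x_{k+1})·(s_k f − f), i.e. T_k f is the polynomial quotient from the usual
definition. -/
def IsDL (n : ℕ) (tv : K) (T : ℕ → P n →ₗ[K] P n) : Prop :=
  ∀ k, ∀ hk : k + 1 < n, ∀ f : P n,
    (X (⟨k, Nat.lt_of_succ_lt hk⟩ : Fin n) - X ⟨k + 1, hk⟩) * T k f =
      (X (⟨k, Nat.lt_of_succ_lt hk⟩ : Fin n) - X ⟨k + 1, hk⟩) * (C tv * f) +
      (C tv * X (⟨k, Nat.lt_of_succ_lt hk⟩ : Fin n) - X ⟨k + 1, hk⟩) * (sOp n k f - f)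

/-- T_k⁻¹ = tv⁻¹ − 1 + tv⁻¹ T_k -/
noncomputable def Tinv (n : ℕ) (tv : K) (T : ℕ → P n →ₗ[K] P n) (k : ℕ) : P n →ₗ[K] P n :=
  tv⁻¹ • LinearMap.id - LinearMap.id + tv⁻¹ • T k

/-- The Cherednik operator Y_i (0-indexed i):
Y_i = tv^{i+1−n}·T_i⋯T_{n−2}·ω·T_0⁻¹⋯T_{i−1}⁻¹. -/
noncomputable def Yop (n : ℕ) (qv tv : K) (T : ℕ → P n →ₗ[K] P n) (i : Fin n) :
    P n →ₗ[K] P n :=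
  (tv ^ (n - 1 - (i : ℕ)))⁻¹ •
    (((List.range' (i : ℕ) (n - 1 - (i : ℕ))).foldr (fun k acc => T k ∘ₗ acc) LinearMap.id) ∘ₗ
      omegaOp n qv ∘ₗ
      ((List.range (i : ℕ)).foldr (fun k acc => Tinv n tv T k ∘ₗ acc) LinearMap.id))

/-- the decreasing rearrangement η⁺ of η -/
noncomputable def sortDesc (n : ℕ) (η : Fin n → ℕ) : Fin n → ℕ :=
  fun i => η (Tuple.sort η i.rev)

/-- dominance order on n-tuples (of equal sum) -/
def domLE (n : ℕ) (ν μ : Fin n → ℕ) : Prop :=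
  (∑ i, ν i = ∑ i, μ i) ∧
  ∀ p : Fin n, ∑ i ∈ univ.filter (· ≤ p), ν i ≤ ∑ i ∈ univ.filter (· ≤ p), μ i

def domLT (n : ℕ) (ν μ : Fin n → ℕ) : Prop := domLE n ν μ ∧ ν ≠ μ

/-- the order ≺ : ν ≺ η iff ν⁺ < η⁺, or ν⁺ = η⁺ and ν < η (dominance order) -/
noncomputable def prec (n : ℕ) (ν η : Fin n → ℕ) : Prop :=
  domLT n (sortDesc n ν) (sortDesc n η) ∨ (sortDesc n ν = sortDesc n η ∧ domLT n ν η)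

/-- E is the non-symmetric Macdonald polynomial for the composition η (with parameters
qv, tv and Demazure–Lustig operators T): it has the triangular form
E = x^η + Σ_{ν≺η} b_{ην} x^ν and satisfies Y_i E = qv^{η_i}·tv^{−l'_η(i)}·E for all i. -/
noncomputable def IsNSMac (n : ℕ) (qv tv : K) (T : ℕ → P n →ₗ[K] P n)
    (η : Fin n → ℕ) (E : P n) : Prop :=
  coeff (Finsupp.equivFunOnFinite.symm η) E = 1 ∧
  (∀ ν : Fin n →₀ ℕ, coeff ν E ≠ 0 → (ν : Fin n → ℕ) = η ∨ prec n (ν : Fin n → ℕ) η) ∧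
  ∀ i : Fin n, Yop n qv tv T i E = (qv ^ η i / tv ^ legCo n η i) • E

/-- Pp is the symmetric Macdonald polynomial for the partition κ (with parameters qv, tv
and Demazure–Lustig operators T): it is symmetric, of the triangular form
m_κ + Σ_{μ<κ} u_{κμ} m_μ, and satisfies (Σ_i Y_i) Pp = (Σ_i qv^{κ_i}·tv^{1−i}) Pp. -/
noncomputable def IsSymMac (n : ℕ) (qv tv : K) (T : ℕ → P n →ₗ[K] P n)
    (κ : Fin n → ℕ) (Pp : P n) : Prop :=
  Pp.IsSymmetric ∧
  coeff (Finsupp.equivFunOnFinite.symm κ) Pp = 1 ∧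
  (∀ ν : Fin n →₀ ℕ, coeff ν Pp ≠ 0 →
    sortDesc n (ν : Fin n → ℕ) = κ ∨ domLT n (sortDesc n (ν : Fin n → ℕ)) κ) ∧
  (∑ i : Fin n, Yop n qv tv T i) Pp = (∑ i : Fin n, qv ^ κ i * (tv ^ (i : ℕ))⁻¹) • Pp


section FieldPart
variable {L : Type*} [Field L]

/-- r(a,b) = (τ a − b)/(a − b), equal to 1 when a = b -/
noncomputable def rr (τ a b : L) : L := 1 + (τ - 1) * a / (a - b)

lemma rr_self (τ a : L) : rr τ a a = 1 := by simp [rr]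

lemma rr_ne (τ : L) {a b : L} (h : a ≠ b) : rr τ a b = (τ * a - b) / (a - b) := by
  have : a - b ≠ 0 := sub_ne_zero.2 h
  unfold rr; field_simp; ring

lemma lag {ι : Type*} [Fintype ι] [DecidableEq ι] (y z : ι → L) (hy : Function.Injective y)
    (hy0 : ∀ i, y i ≠ 0) (hprod : ∏ i, z i = ∏ i, y i) :
    ∑ k, (∏ j, (y k - z j)) / (y k * ∏ j ∈ univ.erase k, (y k - y j)) = 0 := by
  have hinj : Set.InjOn (fun o : Option ι => o.elim 0 y) ((univ : Finset (Option ι)) : Set (Option ι)) := by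
    intro a _ b _ h
    cases a <;> cases b <;> simp at h ⊢
    · exact absurd h.symm (hy0 _)
    · exact absurd h (hy0 _)
    · exact hy h
  have hm : (∏ j, (Polynomial.X - Polynomial.C (z j))).Monic :=
    Polynomial.monic_prod_of_monic _ _ fun j _ => Polynomial.monic_X_sub_C _
  have hd : (∏ j, (Polynomial.X - Polynomial.C (z j))).degree = (Fintype.card ι : WithBot ℕ) := by
    rw [Polynomial.degree_prod]; simp
  have key := Lagrange.leadingCoeff_eq_sum (F := L) hinj (P := ∏ j, (Polynomial.X - Polynomial.C (z j)))
    (by rw [hd]; simp)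
  rw [hm.leadingCoeff, Fintype.sum_option] at key
  have e1 : (univ : Finset (Option ι)).erase none = univ.map Function.Embedding.some := by
    ext a; cases a <;> simp
  have e2 : ∀ k : ι, (univ : Finset (Option ι)).erase (some k) =
      insert none ((univ.erase k).map Function.Embedding.some) := by
    intro k; ext a; cases a <;> simp
  have hne : ∏ i, y i ≠ 0 := prod_ne_zero_iff.2 fun i _ => hy0 i
  simp only [Polynomial.eval_prod, Polynomial.eval_sub, Polynomial.eval_X, Polynomial.eval_C, Option.elim,
    e1, e2, prod_map, Function.Embedding.some_apply] at key
  have e3 : (∏ j, ((0:L) - z j)) / ∏ j, (0 - y j) = 1 := by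
    rw [← prod_div_distrib]
    have : ∀ j, (0 - z j) / (0 - y j) = z j / y j := by intro j; simp [neg_div_neg_eq]
    simp only [this]
    rw [prod_div_distrib, hprod, div_self hne]
  rw [e3] at key
  have e4 : ∀ k : ι, ∏ x ∈ insert none ((univ.erase k).map Function.Embedding.some), (y k - (Option.elim x 0 y)) = y k * ∏ j ∈ univ.erase k, (y k - y j) := by
    intro k
    rw [prod_insert (by simp), prod_map]
    simp only [Option.elim_none, sub_zero, Function.Embedding.some_apply, Option.elim_some]
  have key2 : (1:L) = 1 + ∑ k, (∏ j, (y k - z j)) / (y k * ∏ j ∈ univ.erase k, (y k - y j)) := by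
    refine key.trans ?_
    congr 1
    refine sum_congr rfl fun k _ => ?_
    rw [← e4 k]
    rfl
  simpa using key2.symm

/-- scale coordinate i by c -/
def sc {n : ℕ} (c : L) (x : Fin n → L) (i : Fin n) : Fin n → L :=
  fun j => if j = i then c * x j else x j

/-- A_i(x) -/
noncomputable def AA {n : ℕ} (τ : L) (x : Fin n → L) (i : Fin n) : L := ∏ k, rr τ (x i) (x k)

lemma diag {n : ℕ} (a τ : L) (ha0 : a ≠ 0) (ht0 : τ ≠ 0) (ha1 : a ≠ 1) (ht1 : τ ≠ 1) (hat : a ≠ τ)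
    (x : Fin n → L) (hx : Function.Injective x) (hx0 : ∀ i, x i ≠ 0)
    (hxa : ∀ i j, i ≠ j → a * x i ≠ x j) :
    ∑ i, AA τ x i * AA τ⁻¹ (sc a x i) i = ∑ i, AA τ⁻¹ x i * AA τ (sc a⁻¹ x i) i := by
  have hxa' : ∀ i j, a * x i ≠ x j := by
    intro i j h
    by_cases hij : i = j
    · subst hij
      exact ha1 (mul_right_cancel₀ (hx0 i) (by rw [h, one_mul]))
    · exact hxa i j hij h
  have key := lag (ι := Fin n ⊕ Fin n) (Sum.elim x (fun i => x i / a))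
    (Sum.elim (fun i => x i / τ) (fun i => τ * x i / a)) (by
      intro u v h
      cases u <;> cases v <;> simp at h ⊢
      · exact hx h
      · rename_i i j
        rw [eq_div_iff ha0, mul_comm] at h
        exact hxa' _ _ h
      · rename_i i j
        rw [div_eq_iff ha0, mul_comm] at h
        exact hxa' _ _ h.symm
      · rename_i i j
        exact hx (by field_simp at h; exact h))
    (by intro i; cases i <;> simp [hx0, ha0])
    (by
      simp only [Fintype.prod_sum_type, Sum.elim_inl, Sum.elim_inr, ← prod_mul_distrib]
      refine prod_congr rfl fun i _ => ?_
      field_simp)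
  rw [Fintype.sum_sum_type] at key
  have e1 : ∀ k : Fin n, (univ : Finset (Fin n ⊕ Fin n)).erase (Sum.inl k) =
      (univ.erase k).disjSum univ := by
    intro k; ext u; cases u <;> simp
  have e2 : ∀ k : Fin n, (univ : Finset (Fin n ⊕ Fin n)).erase (Sum.inr k) =
      (univ : Finset (Fin n)).disjSum (univ.erase k) := by
    intro k; ext u; cases u <;> simp
  simp only [e1, e2, prod_disjSum, Fintype.prod_sum_type, Sum.elim_inl, Sum.elim_inr] at key
  set c : L := (1 - 1/τ) * (a - τ) / (a - 1) with hc
  have ha1' : a - 1 ≠ 0 := sub_ne_zero.2 ha1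
  have ht1' : τ - 1 ≠ 0 := sub_ne_zero.2 ht1
  have hat' : a - τ ≠ 0 := sub_ne_zero.2 hat
  have hc0 : c ≠ 0 := by
    have : 1 - 1/τ ≠ 0 := by
      have : 1 - 1/τ = (τ - 1) / τ := by field_simp
      rw [this]; exact div_ne_zero ht1' ht0
    exact div_ne_zero (mul_ne_zero this hat') ha1'
  have h1 : ∀ i, (∏ j, (x i - x j / τ)) * (∏ j, (x i - τ * x j / a)) /
      (x i * ((∏ j ∈ univ.erase i, (x i - x j)) * ∏ j, (x i - x j / a))) =
      c * (AA τ x i * AA τ⁻¹ (sc a x i) i) := by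
    intro i
    unfold AA
    rw [← mul_prod_erase univ (fun j => x i - x j / τ) (mem_univ i),
      ← mul_prod_erase univ (fun j => x i - τ * x j / a) (mem_univ i),
      ← mul_prod_erase univ (fun j => x i - x j / a) (mem_univ i),
      ← mul_prod_erase univ (fun j => rr τ (x i) (x j)) (mem_univ i),
      ← mul_prod_erase univ (fun j => rr τ⁻¹ (sc a x i i) (sc a x i j)) (mem_univ i)]
    rw [rr_self, rr_self, one_mul, one_mul]
    have : (∏ j ∈ univ.erase i, rr τ (x i) (x j)) * (∏ j ∈ univ.erase i, rr τ⁻¹ (sc a x i i) (sc a x i j))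
       = ((∏ j ∈ univ.erase i, (x i - x j / τ)) * (∏ j ∈ univ.erase i, (x i - τ * x j / a))) /
        ((∏ j ∈ univ.erase i, (x i - x j)) * ∏ j ∈ univ.erase i, (x i - x j / a)) := by
      simp only [← prod_mul_distrib, ← prod_div_distrib]
      refine prod_congr rfl fun j hj => ?_
      have hj' : j ≠ i := (mem_erase.1 hj).1
      have n1 : x i - x j ≠ 0 := sub_ne_zero.2 fun h => hj' (hx h).symm
      have n2 : a * x i - x j ≠ 0 := sub_ne_zero.2 (hxa' i j)
      have s1 : sc a x i i = a * x i := by simp [sc]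
      have s2 : sc a x i j = x j := by simp [sc, hj']
      rw [s1, s2, rr_ne _ (sub_ne_zero.1 n1), rr_ne _ (sub_ne_zero.1 n2)]
      have n3 : x i - x j / a = (a * x i - x j) / a := by field_simp
      rw [n3]
      field_simp
    rw [this]
    have n0 := hx0 i
    have n4 : x i - x i / a = x i * (a - 1) / a := by field_simp
    rw [n4]
    have n5 : (∏ j ∈ univ.erase i, (x i - x j)) ≠ 0 := prod_ne_zero_iff.2 fun j hj =>
      sub_ne_zero.2 fun h => (mem_erase.1 hj).1 (hx h).symm
    have n6 : (∏ j ∈ univ.erase i, (x i - x j / a)) ≠ 0 := prod_ne_zero_iff.2 fun j hj =>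
      sub_ne_zero.2 fun h => hxa' i j (by rw [h]; field_simp)
    rw [hc]
    field_simp
  have h2 : ∀ i, (∏ j, (x i / a - x j / τ)) * (∏ j, (x i / a - τ * x j / a)) /
      (x i / a * ((∏ j, (x i / a - x j)) * ∏ j ∈ univ.erase i, (x i / a - x j / a))) =
      - c * (AA τ⁻¹ x i * AA τ (sc a⁻¹ x i) i) := by
    intro i
    unfold AA
    rw [← mul_prod_erase univ (fun j => x i / a - x j / τ) (mem_univ i),
      ← mul_prod_erase univ (fun j => x i / a - τ * x j / a) (mem_univ i),
      ← mul_prod_erase univ (fun j => x i / a - x j) (mem_univ i),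
      ← mul_prod_erase univ (fun j => rr τ⁻¹ (x i) (x j)) (mem_univ i),
      ← mul_prod_erase univ (fun j => rr τ (sc a⁻¹ x i i) (sc a⁻¹ x i j)) (mem_univ i)]
    rw [rr_self, rr_self, one_mul, one_mul]
    have : (∏ j ∈ univ.erase i, rr τ⁻¹ (x i) (x j)) * (∏ j ∈ univ.erase i, rr τ (sc a⁻¹ x i i) (sc a⁻¹ x i j))
       = ((∏ j ∈ univ.erase i, (x i / a - x j / τ)) * (∏ j ∈ univ.erase i, (x i / a - τ * x j / a))) /
        ((∏ j ∈ univ.erase i, (x i / a - x j)) * ∏ j ∈ univ.erase i, (x i / a - x j / a)) := by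
      simp only [← prod_mul_distrib, ← prod_div_distrib]
      refine prod_congr rfl fun j hj => ?_
      have hj' : j ≠ i := (mem_erase.1 hj).1
      have n1 : x i - x j ≠ 0 := sub_ne_zero.2 fun h => hj' (hx h).symm
      have n2 : x i - a * x j ≠ 0 := sub_ne_zero.2 fun h => hxa' j i h.symm
      have s1 : sc a⁻¹ x i i = x i / a := by simp [sc, div_eq_inv_mul]
      have s2 : sc a⁻¹ x i j = x j := by simp [sc, hj']
      have n3 : x i / a - x j = (x i - a * x j) / a := by field_simp
      have n7 : x i / a - x j / a = (x i - x j) / a := by field_simp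
      rw [s1, s2, rr_ne _ (sub_ne_zero.1 n1), rr_ne _ (sub_ne_zero.1 (by rw [n3]; exact div_ne_zero n2 ha0))]
      rw [n3, n7]
      field_simp
    rw [this]
    have n0 := hx0 i
    have n4 : x i / a - x i = - x i * (a - 1) / a := by field_simp; ring
    rw [n4]
    have n5 : (∏ j ∈ univ.erase i, (x i / a - x j / a)) ≠ 0 := prod_ne_zero_iff.2 fun j hj =>
      sub_ne_zero.2 fun h => (mem_erase.1 hj).1 (hx (by field_simp at h; exact h)).symm
    have n6 : (∏ j ∈ univ.erase i, (x i / a - x j)) ≠ 0 := prod_ne_zero_iff.2 fun j hj =>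
      sub_ne_zero.2 fun h => hxa' j i (by rw [← h]; field_simp)
    rw [hc]
    field_simp
    ring
  simp only [h1, h2] at key
  rw [← mul_sum, ← mul_sum, neg_mul, ← sub_eq_add_neg, ← mul_sub] at key
  exact sub_eq_zero.1 ((mul_eq_zero.1 key).resolve_left hc0)

lemma offdiag {n : ℕ} (a τ : L) (ha0 : a ≠ 0) (ht0 : τ ≠ 0)
    (x : Fin n → L) (hx : Function.Injective x)
    (hxa : ∀ i j, i ≠ j → a * x i ≠ x j) (i j : Fin n) (hij : i ≠ j) :
    AA τ x i * AA τ⁻¹ (sc a x i) j = AA τ⁻¹ x j * AA τ (sc a⁻¹ x j) i := by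
  unfold AA
  rw [← mul_prod_erase univ (fun k => rr τ (x i) (x k)) (mem_univ j),
    ← mul_prod_erase univ (fun k => rr τ⁻¹ (sc a x i j) (sc a x i k)) (mem_univ i),
    ← mul_prod_erase univ (fun k => rr τ⁻¹ (x j) (x k)) (mem_univ i),
    ← mul_prod_erase univ (fun k => rr τ (sc a⁻¹ x j i) (sc a⁻¹ x j k)) (mem_univ j)]
  have p1 : ∏ k ∈ univ.erase i, rr τ⁻¹ (sc a x i j) (sc a x i k) = ∏ k ∈ univ.erase i, rr τ⁻¹ (x j) (x k) :=
    prod_congr rfl fun k hk => by simp [sc, (mem_erase.1 hk).1, hij.symm]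
  have p2 : ∏ k ∈ univ.erase j, rr τ (sc a⁻¹ x j i) (sc a⁻¹ x j k) = ∏ k ∈ univ.erase j, rr τ (x i) (x k) :=
    prod_congr rfl fun k hk => by simp [sc, (mem_erase.1 hk).1, hij]
  have p3 : rr τ (x i) (x j) * rr τ⁻¹ (sc a x i j) (sc a x i i) =
      rr τ⁻¹ (x j) (x i) * rr τ (sc a⁻¹ x j i) (sc a⁻¹ x j j) := by
    have s1 : sc a x i j = x j := by simp [sc, hij.symm]
    have s2 : sc a x i i = a * x i := by simp [sc]
    have s3 : sc a⁻¹ x j i = x i := by simp [sc, hij]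
    have s4 : sc a⁻¹ x j j = x j / a := by simp [sc, div_eq_inv_mul]
    have n1 : x i - x j ≠ 0 := sub_ne_zero.2 fun h => hij (hx h)
    have n1' : x j - x i ≠ 0 := sub_ne_zero.2 fun h => hij (hx h).symm
    have n2 : x j - a * x i ≠ 0 := sub_ne_zero.2 fun h => hxa i j hij h.symm
    have n2' : a * x i - x j ≠ 0 := sub_ne_zero.2 (hxa i j hij)
    have n3 : x i - x j / a = (a * x i - x j) / a := by field_simp
    rw [s1, s2, s3, s4, rr_ne _ (sub_ne_zero.1 n1), rr_ne _ (sub_ne_zero.1 n1'), rr_ne _ (sub_ne_zero.1 n2),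
      rr_ne _ (sub_ne_zero.1 (by rw [n3]; exact div_ne_zero n2' ha0)), n3]
    have m1 : x j - x i = -(x i - x j) := by ring
    have m2 : x j - a * x i = -(a * x i - x j) := by ring
    rw [m1, m2]
    field_simp
    ring
  rw [p1, p2]
  linear_combination (∏ k ∈ univ.erase j, rr τ (x i) (x k)) * (∏ k ∈ univ.erase i, rr τ⁻¹ (x j) (x k)) * p3

end FieldPart
section EvalPart
variable {L : Type*} [Field L] [Algebra K L] {n : ℕ}

lemma ev_sym {f : P n} (hf : f.IsSymmetric) (x : Fin n → L) (σ : Equiv.Perm (Fin n)) :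
    aeval (x ∘ σ) f = aeval x f := by
  rw [← aeval_rename, hf σ]

lemma ev_sOp (k : ℕ) (hk : k + 1 < n) (x : Fin n → L) (f : P n) :
    aeval x (sOp n k f) = aeval (x ∘ Equiv.swap (⟨k, Nat.lt_of_succ_lt hk⟩ : Fin n) ⟨k + 1, hk⟩) f := by
  simp [sOp, hk, aeval_rename]

lemma sOp_sym (k : ℕ) (f : P n) (hf : f.IsSymmetric) : sOp n k f = f := by
  unfold sOp
  split_ifs
  · exact hf _
  · rfl

lemma ev_tau (hn : 0 < n) (c : K) (x : Fin n → L) (f : P n) :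
    aeval x (tauOp n c f) = aeval (sc (algebraMap K L c) x ⟨0, hn⟩) f := by
  have : (aeval x).comp (aeval (fun j : Fin n => if (j : ℕ) = 0 then C c * X j else X j) : P n →ₐ[K] P n)
      = aeval (sc (algebraMap K L c) x ⟨0, hn⟩) := by
    apply MvPolynomial.algHom_ext
    intro j
    simp only [AlgHom.comp_apply, aeval_X, sc, Fin.ext_iff]
    split_ifs <;> simp
  exact DFunLike.congr_fun this f

lemma sc_swap (c : L) (x : Fin n → L) (i : Fin n) (σ : Equiv.Perm (Fin n)) :
    sc c (x ∘ σ) i = sc c x (σ i) ∘ σ := by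
  funext j
  simp [sc]

lemma ev_omega (hn : 0 < n) (c : K) (f : P n) (hf : f.IsSymmetric) (x : Fin n → L) :
    aeval x (omegaOp n c f) = aeval (sc (algebraMap K L c) x ⟨n - 1, by omega⟩) f := by
  have : ∀ m (hm : m < n), ∀ x : Fin n → L,
      aeval x ((List.range m).foldl (fun acc k => sOp n k ∘ₗ acc) (tauOp n c) f) =
        aeval (sc (algebraMap K L c) x ⟨m, hm⟩) f := by
    intro m
    induction m with
    | zero => intro hm x; simpa using ev_tau hn c x f
    | succ m ih =>
      intro hm x
      rw [List.range_succ, List.foldl_append]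
      simp only [List.foldl_cons, List.foldl_nil, LinearMap.comp_apply]
      rw [ev_sOp m hm, ih (by omega), sc_swap, ev_sym hf, Equiv.swap_apply_left]
  exact this (n - 1) (by omega) x

lemma X_sub_ne {i j : Fin n} (h : i ≠ j) : (X i - X j : P n) ≠ 0 :=
  sub_ne_zero.2 fun e => h (X_injective e)

lemma T_sym {τ : K} {T : ℕ → P n →ₗ[K] P n} (hT : IsDL n τ T) (k : ℕ) (hk : k + 1 < n)
    (f : P n) (hf : f.IsSymmetric) : T k f = τ • f := by
  have h := hT k hk f
  rw [sOp_sym k f hf, sub_self, mul_zero, add_zero] at h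
  rw [smul_eq_C_mul]
  exact mul_left_cancel₀ (X_sub_ne (by simp [Fin.ext_iff])) h

lemma foldr_eig (S : ℕ → P n →ₗ[K] P n) (c : K) (f : P n) (l : List ℕ)
    (h : ∀ k ∈ l, S k f = c • f) :
    (l.foldr (fun k acc => S k ∘ₗ acc) LinearMap.id) f = c ^ l.length • f := by
  induction l with
  | nil => simp
  | cons a l ih =>
    simp only [List.foldr_cons, LinearMap.comp_apply, List.length_cons]
    rw [ih fun k hk => h k (List.mem_cons_of_mem _ hk), map_smul, h a List.mem_cons_self, smul_smul, pow_succ]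

lemma ev_T {τ : K} {T : ℕ → P n →ₗ[K] P n} (hT : IsDL n τ T) (k : ℕ) (hk : k + 1 < n)
    (f : P n) (x : Fin n → L) (hx : Function.Injective x) :
    aeval x (T k f) = algebraMap K L τ * aeval x f +
      rr (algebraMap K L τ) (x ⟨k, Nat.lt_of_succ_lt hk⟩) (x ⟨k + 1, hk⟩) *
      (aeval (x ∘ Equiv.swap (⟨k, Nat.lt_of_succ_lt hk⟩ : Fin n) ⟨k + 1, hk⟩) f - aeval x f) := by
  have h := congrArg (aeval x) (hT k hk f)
  simp only [map_mul, map_add, map_sub, aeval_X, ev_sOp k hk, aeval_C] at h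
  have hne : x ⟨k, Nat.lt_of_succ_lt hk⟩ ≠ x ⟨k + 1, hk⟩ := fun e => by
    have := hx e
    simp [Fin.ext_iff] at this
  have hne' := sub_ne_zero.2 hne
  rw [rr_ne _ hne]
  apply mul_left_cancel₀ hne'
  rw [h]
  field_simp

/-- the partial sums S_i -/
noncomputable def SS (c τ : K) (f : P n) (x : Fin n → L) (i : ℕ) : L :=
  ∑ j ∈ univ.filter (fun j : Fin n => i ≤ j), aeval (sc (algebraMap K L c) x j) f *
    ∏ k ∈ univ.filter (fun j : Fin n => i ≤ j), rr (algebraMap K L τ) (x j) (x k)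

lemma filter_ge (i : ℕ) (hi : i < n) :
    univ.filter (fun j : Fin n => i ≤ j) = insert ⟨i, hi⟩ (univ.filter (fun j : Fin n => i + 1 ≤ j)) := by
  ext j
  simp [Fin.ext_iff]
  omega

lemma filter_ge_n : univ.filter (fun j : Fin n => n ≤ j) = ∅ := by
  ext j
  simp

lemma SS_n (c τ : K) (f : P n) (x : Fin n → L) : SS c τ f x n = 0 := by
  rw [SS, filter_ge_n, sum_empty]

lemma SS_step (c τ : K) (f : P n) (x : Fin n → L) (i : ℕ) (hi : i < n) :
    SS c τ f x i = aeval (sc (algebraMap K L c) x ⟨i, hi⟩) f *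
      (∏ k ∈ univ.filter (fun j : Fin n => i + 1 ≤ j), rr (algebraMap K L τ) (x ⟨i, hi⟩) (x k)) +
      ∑ j ∈ univ.filter (fun j : Fin n => i + 1 ≤ j), aeval (sc (algebraMap K L c) x j) f *
        (rr (algebraMap K L τ) (x j) (x ⟨i, hi⟩) *
        ∏ k ∈ univ.filter (fun j : Fin n => i + 1 ≤ j), rr (algebraMap K L τ) (x j) (x k)) := by
  unfold SS
  have hn : (⟨i, hi⟩ : Fin n) ∉ univ.filter (fun j : Fin n => i + 1 ≤ j) := by simp
  rw [filter_ge i hi, sum_insert hn]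
  simp only [prod_insert hn, rr_self, one_mul]

lemma rr_add (τ : L) {a b : L} (h : a ≠ b) : rr τ a b + rr τ b a = τ + 1 := by
  rw [rr_ne _ h, rr_ne _ h.symm]
  have n1 : a - b ≠ 0 := sub_ne_zero.2 h
  have m : b - a = -(a - b) := by ring
  rw [m]
  field_simp
  ring

lemma WW_step (c τ : K) (f : P n) (hf : f.IsSymmetric) (x : Fin n → L) (hx : Function.Injective x)
    (i : ℕ) (hi : i + 1 < n) :
    algebraMap K L τ * (SS c τ f x (i+1) - SS c τ f x (i+2)) +
      rr (algebraMap K L τ) (x ⟨i, Nat.lt_of_succ_lt hi⟩) (x ⟨i + 1, hi⟩) *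
      ((SS c τ f (x ∘ Equiv.swap (⟨i, Nat.lt_of_succ_lt hi⟩ : Fin n) ⟨i + 1, hi⟩) (i+1) -
        SS c τ f (x ∘ Equiv.swap (⟨i, Nat.lt_of_succ_lt hi⟩ : Fin n) ⟨i + 1, hi⟩) (i+2))
        - (SS c τ f x (i+1) - SS c τ f x (i+2))) =
    SS c τ f x i - SS c τ f x (i + 1) := by
  set σ := Equiv.swap (⟨i, Nat.lt_of_succ_lt hi⟩ : Fin n) ⟨i + 1, hi⟩ with hσ
  set τ' := algebraMap K L τ with hτ
  set J := univ.filter (fun j : Fin n => i + 2 ≤ j) with hJ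
  have hfix : ∀ j ∈ J, σ j = j := by
    intro j hj
    have : i + 2 ≤ (j : ℕ) := by simpa [hJ] using hj
    apply Equiv.swap_apply_of_ne_of_ne <;> · simp only [ne_eq, Fin.ext_iff]; omega
  have hG : ∀ j, aeval (sc (algebraMap K L c) (x ∘ σ) j) f = aeval (sc (algebraMap K L c) x (σ j)) f := by
    intro j
    rw [sc_swap, ev_sym hf]
  set G := fun j => aeval (sc (algebraMap K L c) x j) f with hGdef
  set a := x ⟨i, Nat.lt_of_succ_lt hi⟩ with ha
  set b := x ⟨i + 1, hi⟩ with hb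
  have hab : a ≠ b := fun e => by
    have := hx e
    simp [Fin.ext_iff] at this
  set R := fun j => ∏ k ∈ J, rr τ' (x j) (x k) with hR
  have E2 : SS c τ f x (i+2) = ∑ j ∈ J, G j * R j := rfl
  have E1 : SS c τ f x (i+1) = G ⟨i + 1, hi⟩ * R ⟨i+1, hi⟩ + ∑ j ∈ J, G j * (rr τ' (x j) b * R j) :=
    SS_step c τ f x (i+1) hi
  have hnot : (⟨i+1, hi⟩ : Fin n) ∉ J := by simp [hJ]
  have E0 : SS c τ f x i = G ⟨i, Nat.lt_of_succ_lt hi⟩ * (rr τ' a b * R ⟨i, Nat.lt_of_succ_lt hi⟩) +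
      (G ⟨i + 1, hi⟩ * (rr τ' b a * R ⟨i+1, hi⟩) +
        ∑ j ∈ J, G j * (rr τ' (x j) a * (rr τ' (x j) b * R j))) := by
    rw [SS_step c τ f x i (Nat.lt_of_succ_lt hi),
      show univ.filter (fun j : Fin n => i + 1 ≤ j) = insert ⟨i + 1, hi⟩ J from filter_ge (i+1) hi]
    simp only [prod_insert hnot, sum_insert hnot, rr_self, one_mul]
    rfl
  have F2 : SS c τ f (x ∘ σ) (i+2) = ∑ j ∈ J, G j * R j := by
    unfold SS
    refine sum_congr rfl fun j hj => ?_
    rw [hG, hfix j hj]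
    congr 1
    refine prod_congr rfl fun k hk => ?_
    simp only [Function.comp, hfix j hj, hfix k hk]
    rfl
  have F1 : SS c τ f (x ∘ σ) (i+1) = G ⟨i, Nat.lt_of_succ_lt hi⟩ * R ⟨i, Nat.lt_of_succ_lt hi⟩ +
      ∑ j ∈ J, G j * (rr τ' (x j) a * R j) := by
    rw [SS_step c τ f (x ∘ σ) (i+1) hi]
    have s1 : σ ⟨i+1, hi⟩ = ⟨i, Nat.lt_of_succ_lt hi⟩ := Equiv.swap_apply_right _ _
    congr 1
    · rw [hG, s1]
      congr 1
      refine prod_congr rfl fun k hk => ?_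
      simp only [Function.comp, hfix k hk, s1]
      rfl
    · refine sum_congr rfl fun j hj => ?_
      rw [hG, hfix j hj]
      congr 1
      simp only [Function.comp, hfix j hj, s1]
      congr 1
      refine prod_congr rfl fun k hk => ?_
      simp only [hfix k hk]
      rfl
  have hsum : ∑ j ∈ J, G j * (rr τ' (x j) a * (rr τ' (x j) b * R j)) - ∑ j ∈ J, G j * (rr τ' (x j) b * R j) =
      τ' * (∑ j ∈ J, G j * (rr τ' (x j) b * R j) - ∑ j ∈ J, G j * R j) +
      rr τ' a b * (∑ j ∈ J, G j * (rr τ' (x j) a * R j) - ∑ j ∈ J, G j * (rr τ' (x j) b * R j)) := by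
    simp only [← sum_sub_distrib, mul_sum, ← sum_add_distrib]
    refine sum_congr rfl fun j hj => ?_
    have hj2 : i + 2 ≤ (j : ℕ) := by simpa [hJ] using hj
    have hja : x j ≠ a := fun e => by
      have := hx e
      simp only [Fin.ext_iff] at this; omega
    have hjb : x j ≠ b := fun e => by
      have := hx e
      simp only [Fin.ext_iff] at this; omega
    rw [rr_ne _ hja, rr_ne _ hjb, rr_ne _ hab]
    have n1 := sub_ne_zero.2 hja
    have n2 := sub_ne_zero.2 hjb
    have n3 := sub_ne_zero.2 hab
    field_simp
    ring
  have hadd := rr_add τ' hab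
  rw [E0, E1, E2, F1, F2]
  linear_combination - hsum - (G ⟨i + 1, hi⟩ * R ⟨i+1, hi⟩) * hadd

lemma ev_U (c τ : K) {T : ℕ → P n →ₗ[K] P n} (hT : IsDL n τ T) (f : P n) (hf : f.IsSymmetric) :
    ∀ m i, i + m + 1 = n → ∀ x : Fin n → L, Function.Injective x →
      aeval x (((List.range' i m).foldr (fun k acc => T k ∘ₗ acc) LinearMap.id) (omegaOp n c f)) =
        SS c τ f x i - SS c τ f x (i + 1) := by
  intro m
  induction m with
  | zero =>
    intro i hi x hx
    have hi' : i + 1 = n := by omega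
    subst hi'
    simp only [List.range'_zero, List.foldr_nil, LinearMap.id_apply]
    rw [ev_omega (by omega) c f hf, SS_n, SS_step c τ f x i (by omega), filter_ge_n]
    simp
  | succ m ih =>
    intro i hi x hx
    simp only [List.range'_succ, List.foldr_cons, LinearMap.comp_apply]
    rw [ev_T hT i (by omega) _ x hx, ih (i+1) (by omega) x hx,
      ih (i+1) (by omega) _ (hx.comp (Equiv.injective _)), WW_step c τ f hf x hx i (by omega)]

/-- the operator D has the explicit form on symmetric polynomials -/
def IsD (L : Type*) [Field L] [Algebra K L] (n : ℕ) (c τ : K) (D : P n →ₗ[K] P n) : Prop :=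
  ∀ f : P n, f.IsSymmetric → ∀ x : Fin n → L, Function.Injective x →
    aeval x (D f) = algebraMap K L (τ ^ (n - 1))⁻¹ *
      ∑ j, AA (algebraMap K L τ) x j * aeval (sc (algebraMap K L c) x j) f

lemma isD_Y (c τ : K) (hτ : τ ≠ 0) {T : ℕ → P n →ₗ[K] P n} (hT : IsDL n τ T) :
    IsD L n c τ (∑ i : Fin n, Yop n c τ T i) := by
  intro f hf x hx
  have hY : ∀ i : Fin n, aeval x (Yop n c τ T i f) = algebraMap K L (τ ^ (n - 1))⁻¹ *
      (SS c τ f x i - SS c τ f x (i + 1)) := by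
    intro i
    have hi := i.2
    unfold Yop
    simp only [LinearMap.smul_apply, LinearMap.comp_apply]
    rw [foldr_eig (Tinv n τ T) τ⁻¹ f (List.range i)]
    · rw [map_smul, map_smul, map_smul, map_smul, ev_U c τ hT f hf (n - 1 - i) i (by omega) x hx,
        List.length_range, smul_smul, Algebra.smul_def]
      congr 2
      rw [inv_pow, ← mul_inv, ← pow_add]
      congr 2
      omega
    · intro k hk
      have hk' : k < i := List.mem_range.1 hk
      simp only [Tinv, LinearMap.add_apply, LinearMap.sub_apply, LinearMap.smul_apply, LinearMap.id_apply]
      rw [T_sym hT k (by omega) f hf, smul_smul, inv_mul_cancel₀ hτ, one_smul]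
      abel
  rw [LinearMap.sum_apply, map_sum]
  simp only [hY]
  rw [← mul_sum]
  congr 1
  rw [Fin.sum_univ_eq_sum_range (fun i => SS c τ f x i - SS c τ f x (i+1)), sum_range_sub', SS_n, sub_zero]
  simp [SS, AA, mul_comm]

end EvalPart
section FinalPart
variable {n : ℕ}

/-- the generic point -/
noncomputable def xg (n : ℕ) : Fin n → FractionRing (P n) :=
  fun i => algebraMap (P n) (FractionRing (P n)) (X i)

lemma alg_inj : Function.Injective (algebraMap (P n) (FractionRing (P n))) :=
  IsFractionRing.injective _ _

lemma aeval_xg (f : P n) : aeval (xg n) f = algebraMap (P n) (FractionRing (P n)) f := by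
  have : xg n = algebraMap (P n) (FractionRing (P n)) ∘ X := rfl
  have h := aeval_algebraMap_apply (FractionRing (P n)) (X : Fin n → P n) f
  rw [aeval_X_left_apply] at h
  exact h

lemma ext_xg {f g : P n} (h : aeval (xg n) f = aeval (xg n) g) : f = g := by
  rw [aeval_xg, aeval_xg] at h
  exact alg_inj h

lemma xg_inj : Function.Injective (xg n) := fun _ _ h => X_injective (alg_inj h)

lemma xg_ne (i : Fin n) : xg n i ≠ 0 := fun h =>
  X_ne_zero (R := K) i (alg_inj (by rw [map_zero]; exact h))

lemma xg_sc (c : K) (i j : Fin n) (hij : i ≠ j) :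
    algebraMap K (FractionRing (P n)) c * xg n i ≠ xg n j := by
  intro h
  have h1 : aeval (xg n) (C c * X i : P n) = aeval (xg n) (X j : P n) := by
    rw [map_mul, aeval_C, aeval_X, aeval_X]; exact h
  have h2 := congrArg (coeff (Finsupp.single j 1)) (ext_xg h1)
  rw [coeff_C_mul, coeff_X, coeff_X', if_neg] at h2
  · simp at h2
  · intro e
    exact hij (Finsupp.single_left_injective one_ne_zero e)

lemma sc_xg_inj (c : K) (i : Fin n) :
    Function.Injective (sc (algebraMap K (FractionRing (P n)) c) (xg n) i) ∨ c = 0 := by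
  by_cases hc : c = 0
  · exact Or.inr hc
  left
  intro a b h
  unfold sc at h
  split_ifs at h with h1 h2 h2
  · rw [h1, h2]
  · exact absurd h (xg_sc c a b (by rw [h1]; exact fun e => h2 e.symm))
  · exact absurd h.symm (xg_sc c b a (by rw [h2]; exact fun e => h1 e.symm))
  · exact xg_inj h

lemma AA_perm {L : Type*} [Field L] (τ : L) (x : Fin n → L) (σ : Equiv.Perm (Fin n)) (j : Fin n) :
    AA τ (x ∘ σ) j = AA τ x (σ j) := by
  unfold AA
  exact Equiv.prod_comp σ (fun k => rr τ (x (σ j)) (x k))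

lemma sym_field {L : Type*} [Field L] [Algebra K L] (c τ : L) (f : P n) (hf : f.IsSymmetric)
    (x : Fin n → L) (σ : Equiv.Perm (Fin n)) :
    ∑ j, AA τ (x ∘ σ) j * aeval (sc c (x ∘ σ) j) f = ∑ j, AA τ x j * aeval (sc c x j) f := by
  simp only [AA_perm, sc_swap, ev_sym hf]
  exact Equiv.sum_comp σ (fun j => AA τ x j * aeval (sc c x j) f)

lemma D_sym {c τ : K} {D : P n →ₗ[K] P n} (hD : IsD (FractionRing (P n)) n c τ D)
    {f : P n} (hf : f.IsSymmetric) : (D f).IsSymmetric := by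
  intro σ
  apply ext_xg
  rw [aeval_rename, hD f hf _ (xg_inj.comp σ.injective), hD f hf _ xg_inj, sym_field _ _ f hf]

lemma sc_comm {L : Type*} [Field L] (a b : L) (x : Fin n → L) (i j : Fin n) :
    sc a (sc b x i) j = sc b (sc a x j) i := by
  funext k
  simp only [sc]
  split_ifs <;> ring

lemma comm_field {L : Type*} [Field L] (a s u u' : L) (a0 : a ≠ 0) (s0 : s ≠ 0) (a1 : a ≠ 1)
    (s1 : s ≠ 1) (as : a ≠ s) (x : Fin n → L) (hx : Function.Injective x) (hx0 : ∀ i, x i ≠ 0)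
    (hxa : ∀ i j, i ≠ j → a * x i ≠ x j) (F : (Fin n → L) → L) :
    u * ∑ i, AA s x i * (u' * ∑ j, AA s⁻¹ (sc a x i) j * F (sc a⁻¹ (sc a x i) j)) =
    u' * ∑ j, AA s⁻¹ x j * (u * ∑ i, AA s (sc a⁻¹ x j) i * F (sc a (sc a⁻¹ x j) i)) := by
  have hdiag := diag a s a0 s0 a1 s1 as x hx hx0 hxa
  have hoff := offdiag a s a0 s0 x hx hxa
  have hs2 : ∀ i j, AA s x i * (AA s⁻¹ (sc a x i) j * F (sc a⁻¹ (sc a x i) j))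
     - AA s⁻¹ x j * (AA s (sc a⁻¹ x j) i * F (sc a (sc a⁻¹ x j) i)) =
     if i = j then (AA s x i * AA s⁻¹ (sc a x i) i - AA s⁻¹ x i * AA s (sc a⁻¹ x i) i)
      * F x else 0 := by
    intro i j
    rw [sc_comm a a⁻¹]
    split_ifs with h
    · subst h
      have : sc a⁻¹ (sc a x i) i = x := by
        funext k
        simp only [sc]
        split_ifs
        · rw [inv_mul_cancel_left₀ a0]
        · rfl
      rw [this]
      ring
    · rw [← mul_assoc, ← mul_assoc, hoff i j h, sub_self]
  have main : ∑ i, ∑ j, AA s x i * (AA s⁻¹ (sc a x i) j * F (sc a⁻¹ (sc a x i) j)) =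
      ∑ i, ∑ j, AA s⁻¹ x j * (AA s (sc a⁻¹ x j) i * F (sc a (sc a⁻¹ x j) i)) := by
    rw [← sub_eq_zero, ← sum_sub_distrib]
    simp only [← sum_sub_distrib, hs2, sum_ite_eq, mem_univ, if_true]
    rw [← sum_mul, sum_sub_distrib, hdiag, sub_self, zero_mul]
  rw [sum_comm (f := fun i j => AA s⁻¹ x j * (AA s (sc a⁻¹ x j) i * F (sc a (sc a⁻¹ x j) i)))] at main
  have l1 : ∀ i, AA s x i * (u' * ∑ j, AA s⁻¹ (sc a x i) j * F (sc a⁻¹ (sc a x i) j)) =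
      u' * ∑ j, AA s x i * (AA s⁻¹ (sc a x i) j * F (sc a⁻¹ (sc a x i) j)) := by
    intro i
    rw [← mul_sum]
    ring
  have l2 : ∀ j, AA s⁻¹ x j * (u * ∑ i, AA s (sc a⁻¹ x j) i * F (sc a (sc a⁻¹ x j) i)) =
      u * ∑ i, AA s⁻¹ x j * (AA s (sc a⁻¹ x j) i * F (sc a (sc a⁻¹ x j) i)) := by
    intro j
    rw [← mul_sum]
    ring
  rw [sum_congr rfl fun i _ => l1 i, sum_congr rfl fun i _ => l2 i, ← mul_sum, ← mul_sum, main]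
  ring

lemma D_comm {c τ : K} (hc0 : c ≠ 0) (hτ0 : τ ≠ 0) (hc1 : c ≠ 1) (hτ1 : τ ≠ 1) (hcτ : c ≠ τ)
    {D D' : P n →ₗ[K] P n} (hD : IsD (FractionRing (P n)) n c τ D)
    (hD' : IsD (FractionRing (P n)) n c⁻¹ τ⁻¹ D') {f : P n} (hf : f.IsSymmetric) :
    D (D' f) = D' (D f) := by
  apply ext_xg
  rw [hD _ (D_sym hD' hf) _ xg_inj, hD' _ (D_sym hD hf) _ xg_inj]
  have e1 := fun j => hD' f hf _ ((sc_xg_inj c j).resolve_right hc0)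
  have e2 := fun j => hD f hf _ ((sc_xg_inj c⁻¹ j).resolve_right (inv_ne_zero hc0))
  rw [sum_congr rfl fun j _ => congrArg (_ * ·) (e1 j), sum_congr rfl fun j _ => congrArg (_ * ·) (e2 j)]
  have hinj := (algebraMap K (FractionRing (P n))).injective
  have a0 := hinj.ne hc0
  have s0 := hinj.ne hτ0
  have a1 := hinj.ne hc1
  have s1 := hinj.ne hτ1
  rw [map_zero] at a0 s0
  rw [map_one] at a1 s1
  have i1 := map_inv₀ (algebraMap K (FractionRing (P n))) c
  have i2 := map_inv₀ (algebraMap K (FractionRing (P n))) τ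
  rw [i1, i2]
  exact comm_field _ _ _ _ a0 s0 a1 s1 (hinj.ne hcτ) (xg n) xg_inj xg_ne (xg_sc c) (fun y => aeval y f)

/-- scaling on the polynomial ring -/
noncomputable def scl (c : K) (i : Fin n) : P n →ₐ[K] P n :=
  aeval (fun j => if j = i then C c * X j else X j)

lemma ev_scl {L : Type*} [Field L] [Algebra K L] (c : K) (i : Fin n) (x : Fin n → L) (f : P n) :
    aeval x (scl c i f) = aeval (sc (algebraMap K L c) x i) f := by
  have : (aeval x).comp (scl c i : P n →ₐ[K] P n) = aeval (sc (algebraMap K L c) x i) := by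
    apply MvPolynomial.algHom_ext
    intro j
    simp only [AlgHom.comp_apply, aeval_X, sc, scl]
    split_ifs <;> simp
  exact DFunLike.congr_fun this f

lemma scl_monomial (c : K) (i : Fin n) (ν : Fin n →₀ ℕ) (a : K) :
    scl c i (monomial ν a) = monomial ν (c ^ ν i * a) := by
  unfold scl
  rw [aeval_monomial, Finsupp.prod_fintype _ _ (by simp), monomial_eq (a := c ^ ν i * a),
    Finsupp.prod_fintype _ _ (by simp)]
  have : ∀ j : Fin n, (if j = i then C c * X j else X j : P n) = (if j = i then C c else 1) * X j := by
    intro j; split_ifs <;> simp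
  simp only [this, mul_pow, prod_mul_distrib, ite_pow, one_pow, prod_ite_eq', mem_univ, if_true]
  rw [C_mul, C_pow, MvPolynomial.algebraMap_eq]
  ring

lemma coeff_scl (c : K) (i : Fin n) (ν : Fin n →₀ ℕ) (f : P n) :
    coeff ν (scl c i f) = c ^ ν i * coeff ν f := by
  induction f using MvPolynomial.induction_on' with
  | monomial u a =>
    rw [scl_monomial]
    simp only [coeff_monomial]
    split_ifs with h
    · subst h; rfl
    · simp
  | add p r hp hr =>
    rw [map_add, coeff_add, coeff_add, hp, hr, mul_add]

/-- the Vandermonde product -/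
noncomputable def VV (n : ℕ) : P n := ∏ i : Fin n, ∏ j ∈ Ioi i, (X i - X j)

lemma VV_scl {L : Type*} [Field L] [Algebra K L] (τ : L) (i : Fin n) (x : Fin n → L)
    (hx : Function.Injective x) :
    aeval (sc τ x i) (VV n) = AA τ x i * aeval x (VV n) := by
  unfold VV
  simp only [map_prod, map_sub, aeval_X]
  have h1 : ∀ a, ∀ b ∈ Ioi a, sc τ x i a - sc τ x i b =
      ((if a = i then rr τ (x i) (x b) else 1) * (if b = i then rr τ (x i) (x a) else 1)) * (x a - x b) := by
    intro a b hb
    have hab : a < b := mem_Ioi.1 hb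
    have hne : x a - x b ≠ 0 := sub_ne_zero.2 fun e => hab.ne (hx e)
    have hne' : x b - x a ≠ 0 := sub_ne_zero.2 fun e => hab.ne (hx e).symm
    by_cases ha : a = i
    · have hb' : b ≠ i := fun e => hab.ne (ha.trans e.symm)
      subst ha
      simp only [sc, if_neg hb', if_true, mul_one]
      rw [rr_ne _ (sub_ne_zero.1 hne)]
      field_simp
    · by_cases hb' : b = i
      · subst hb'
        simp only [sc, if_neg ha, if_true, one_mul]
        rw [rr_ne _ (sub_ne_zero.1 hne')]
        have : x a - x b = -(x b - x a) := by ring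
        rw [this]
        field_simp
        ring
      · simp [sc, ha, hb']
  rw [prod_congr rfl fun a _ => prod_congr rfl (h1 a)]
  simp only [prod_mul_distrib]
  congr 1
  have p1 : ∏ a, ∏ b ∈ Ioi a, (if a = i then rr τ (x i) (x b) else 1) =
      ∏ b, if i < b then rr τ (x i) (x b) else 1 := by
    rw [prod_eq_single i]
    · simp only [if_true]
      rw [← prod_filter]
      congr 1
      ext; simp
    · intro a _ ha
      simp [ha]
    · simp
  have p2 : ∏ a, ∏ b ∈ Ioi a, (if b = i then rr τ (x i) (x a) else 1) =
      ∏ a, if a < i then rr τ (x i) (x a) else 1 := by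
    refine prod_congr rfl fun a _ => ?_
    rw [prod_ite_eq']
    simp
  rw [p1, p2, ← prod_mul_distrib]
  unfold AA
  refine prod_congr rfl fun k _ => ?_
  rcases lt_trichotomy i k with h | h | h
  · simp [h, h.not_gt]
  · subst h; simp [rr_self]
  · simp [h, h.not_gt]

lemma VV_ne : VV n ≠ 0 := by
  unfold VV
  refine prod_ne_zero_iff.2 fun i _ => prod_ne_zero_iff.2 fun j hj => X_sub_ne (mem_Ioi.1 hj).ne

lemma VV_deg (i : Fin n) : MonomialOrder.lex.degree (VV n) i = n - 1 - i := by
  unfold VV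
  rw [MonomialOrder.degree_prod fun i _ => prod_ne_zero_iff.2 fun j hj => X_sub_ne (mem_Ioi.1 hj).ne]
  have h1 : ∀ a : Fin n, MonomialOrder.lex.degree (∏ j ∈ Ioi a, (X a - X j : P n)) =
      (n - 1 - a) • Finsupp.single a 1 := by
    intro a
    rw [MonomialOrder.degree_prod fun j hj => X_sub_ne (mem_Ioi.1 hj).ne]
    rw [sum_congr rfl (g := fun _ => Finsupp.single a 1), sum_const, Fin.card_Ioi]
    intro j hj
    have hj' := mem_Ioi.1 hj
    rw [MonomialOrder.degree_sub_of_lt, MonomialOrder.degree_X]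
    rw [MonomialOrder.degree_X, MonomialOrder.degree_X, MonomialOrder.lex_lt_iff]
    exact Finsupp.Lex.single_lt_iff.2 hj'
  rw [sum_congr rfl fun a _ => h1 a, Finsupp.finsetSum_apply, sum_eq_single i]
  · simp
  · intro a _ ha
    rw [Finsupp.smul_apply, Finsupp.single_eq_of_ne ha.symm, smul_zero]
  · simp

lemma deg_scl (c : K) (i : Fin n) (f : P n) :
    MonomialOrder.lex.toSyn (MonomialOrder.lex.degree (scl c i f)) ≤
      MonomialOrder.lex.toSyn (MonomialOrder.lex.degree f) := by
  rw [MonomialOrder.degree_le_iff]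
  intro b hb
  apply MonomialOrder.le_degree
  rw [mem_support_iff, coeff_scl] at hb
  rw [mem_support_iff]
  exact right_ne_zero_of_mul hb

lemma eigen {c τ : K} (hτ : τ ≠ 0) {D : P n →ₗ[K] P n} (hD : IsD (FractionRing (P n)) n c τ D)
    {f : P n} (hf : f.IsSymmetric) (hf0 : f ≠ 0) (e : K) (he : D f = e • f) :
    e = ∑ i : Fin n, c ^ (MonomialOrder.lex.degree f i) * (τ ^ (i : ℕ))⁻¹ := by
  have h1 : VV n * D f = (τ ^ (n - 1))⁻¹ • ∑ j, scl τ j (VV n) * scl c j f := by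
    apply ext_xg
    rw [map_mul, map_smul, map_sum, hD f hf _ xg_inj, Algebra.smul_def, mul_left_comm, mul_sum]
    congr 1
    refine sum_congr rfl fun j _ => ?_
    rw [map_mul, ev_scl, ev_scl, VV_scl _ _ _ xg_inj]
    ring
  rw [he] at h1
  have h2 := congrArg (coeff (MonomialOrder.lex.degree (VV n) + MonomialOrder.lex.degree f)) h1
  rw [mul_smul_comm, coeff_smul, coeff_smul, MonomialOrder.coeff_mul_of_degree_add, coeff_sum] at h2
  have h3 : ∀ j : Fin n, coeff (MonomialOrder.lex.degree (VV n) + MonomialOrder.lex.degree f)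
      (scl τ j (VV n) * scl c j f) = (τ ^ (n - 1 - (j : ℕ)) * c ^ (MonomialOrder.lex.degree f j)) *
        (MonomialOrder.lex.leadingCoeff (VV n) * MonomialOrder.lex.leadingCoeff f) := by
    intro j
    rw [MonomialOrder.lex.coeff_mul_of_add_of_degree_le (deg_scl _ _ _) (deg_scl _ _ _), coeff_scl, coeff_scl,
      VV_deg]
    unfold MonomialOrder.leadingCoeff
    ring
  simp only [h3] at h2
  rw [← sum_mul, smul_eq_mul, smul_eq_mul, ← mul_assoc (_⁻¹)] at h2
  have hne : MonomialOrder.lex.leadingCoeff (VV n) * MonomialOrder.lex.leadingCoeff f ≠ 0 :=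
    mul_ne_zero (MonomialOrder.leadingCoeff_ne_zero_iff.2 VV_ne) (MonomialOrder.leadingCoeff_ne_zero_iff.2 hf0)
  have h5 := mul_right_cancel₀ hne h2
  rw [h5, mul_sum]
  refine sum_congr rfl fun j _ => ?_
  have hj := j.2
  have : τ ^ (n - 1) = τ ^ (n - 1 - (j : ℕ)) * τ ^ (j : ℕ) := by rw [← pow_add]; congr 1; omega
  rw [this]
  have := pow_ne_zero (n - 1 - (j : ℕ)) hτ
  have := pow_ne_zero (j : ℕ) hτ
  field_simp

/-- eigenvalues separate -/
def EI (n : ℕ) (c τ : K) : Prop := ∀ κ l : Fin n → ℕ,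
  ∑ i : Fin n, c ^ κ i * (τ ^ (i : ℕ))⁻¹ = ∑ i : Fin n, c ^ l i * (τ ^ (i : ℕ))⁻¹ → κ = l

lemma uniq {c τ : K} (hτ : τ ≠ 0) (hE : EI n c τ) {D : P n →ₗ[K] P n}
    (hD : IsD (FractionRing (P n)) n c τ D) {f : P n} (hf : f.IsSymmetric) (κ : Fin n → ℕ)
    (he : D f = (∑ i : Fin n, c ^ κ i * (τ ^ (i : ℕ))⁻¹) • f)
    (h0 : coeff (Finsupp.equivFunOnFinite.symm κ) f = 0) : f = 0 := by
  by_contra hf0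
  have h := hE _ _ (eigen hτ hD hf hf0 _ he)
  have h' : Finsupp.equivFunOnFinite.symm κ = MonomialOrder.lex.degree f := by
    ext i; exact congrFun h i
  rw [h'] at h0
  exact MonomialOrder.leadingCoeff_ne_zero_iff.2 hf0 h0

lemma qt_inj (a a' b : Fin n → ℕ) (hb : Function.Injective b)
    (h : ∑ i, q ^ a i * t ^ b i = ∑ i, q ^ a' i * t ^ b i) : a = a' := by
  unfold q t at h
  simp only [← map_pow, ← map_mul, ← map_sum] at h
  have h1 := IsFractionRing.injective (MvPolynomial (Fin 2) ℚ) K h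
  have hm : ∀ u v : ℕ, (X 0 ^ u * X 1 ^ v : MvPolynomial (Fin 2) ℚ) =
      monomial (Finsupp.single 0 u + Finsupp.single 1 v) 1 := by
    intro u v
    rw [X_pow_eq_monomial, X_pow_eq_monomial, monomial_mul, one_mul]
  have hs : ∀ u v u' v' : ℕ, (Finsupp.single (0 : Fin 2) u + Finsupp.single 1 v =
      Finsupp.single 0 u' + Finsupp.single 1 v') ↔ (u = u' ∧ v = v') := by
    intro u v u' v'
    constructor
    · intro e
      have e0 := DFunLike.congr_fun e 0
      have e1 := DFunLike.congr_fun e 1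
      simp at e0 e1
      exact ⟨e0, e1⟩
    · rintro ⟨rfl, rfl⟩; rfl
  simp only [hm] at h1
  funext i
  have h2 := congrArg (coeff (Finsupp.single 0 (a i) + Finsupp.single 1 (b i))) h1
  simp only [coeff_sum, coeff_monomial, hs] at h2
  rw [sum_eq_single i (fun j _ hj => if_neg fun e => hj (hb e.2)) (by simp),
    sum_eq_single i (fun j _ hj => if_neg fun e => hj (hb e.2)) (by simp)] at h2
  by_contra hne
  simp [Ne.symm hne] at h2

lemma q_ne : q ≠ 0 := fun h => X_ne_zero (R := ℚ) (0 : Fin 2)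
  (IsFractionRing.injective (MvPolynomial (Fin 2) ℚ) K (by rw [map_zero]; exact h))

lemma t_ne : t ≠ 0 := fun h => X_ne_zero (R := ℚ) (1 : Fin 2)
  (IsFractionRing.injective (MvPolynomial (Fin 2) ℚ) K (by rw [map_zero]; exact h))

lemma X_ne_one (i : Fin 2) : (X i : MvPolynomial (Fin 2) ℚ) ≠ 1 := fun h => by
  have := congrArg (MvPolynomial.eval (fun _ => (0 : ℚ))) h
  simp at this

lemma q_ne1 : q ≠ 1 := fun h => X_ne_one 0
  (IsFractionRing.injective (MvPolynomial (Fin 2) ℚ) K (by rw [map_one]; exact h))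

lemma t_ne1 : t ≠ 1 := fun h => X_ne_one 1
  (IsFractionRing.injective (MvPolynomial (Fin 2) ℚ) K (by rw [map_one]; exact h))

lemma q_ne_t : q ≠ t := fun h => by
  have := X_injective (IsFractionRing.injective (MvPolynomial (Fin 2) ℚ) K h)
  simp at this

lemma EI_qt : EI n q t := by
  intro κ l h
  apply qt_inj κ l (fun i => n - 1 - i) (fun i j h => by
    have := i.2; have := j.2
    simp only at h
    ext; omega)
  have key : ∀ a : Fin n → ℕ, ∑ i : Fin n, q ^ a i * t ^ (n - 1 - (i : ℕ)) =
      t ^ (n - 1) * ∑ i : Fin n, q ^ a i * (t ^ (i : ℕ))⁻¹ := by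
    intro a
    rw [mul_sum]
    refine sum_congr rfl fun j _ => ?_
    have hj := j.2
    have : t ^ (n - 1) = t ^ (n - 1 - (j : ℕ)) * t ^ (j : ℕ) := by rw [← pow_add]; congr 1; omega
    rw [this]
    have := pow_ne_zero (j : ℕ) t_ne
    field_simp
  rw [key, key, h]

lemma EI_qt_inv : EI n q⁻¹ t⁻¹ := by
  intro κ l h
  set N := ∑ i, κ i + ∑ i, l i with hN
  have hκ : ∀ i, κ i ≤ N := fun i =>
    (single_le_sum (f := κ) (fun _ _ => Nat.zero_le _) (mem_univ i)).trans (Nat.le_add_right _ _)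
  have hl : ∀ i, l i ≤ N := fun i =>
    (single_le_sum (f := l) (fun _ _ => Nat.zero_le _) (mem_univ i)).trans (Nat.le_add_left _ _)
  have key : ∀ a : Fin n → ℕ, (∀ i, a i ≤ N) → ∑ i : Fin n, q ^ (N - a i) * t ^ (i : ℕ) =
      q ^ N * ∑ i : Fin n, q⁻¹ ^ a i * (t⁻¹ ^ (i : ℕ))⁻¹ := by
    intro a ha
    rw [mul_sum]
    refine sum_congr rfl fun j _ => ?_
    have : q ^ N = q ^ (N - a j) * q ^ (a j) := by rw [← pow_add]; congr 1; have := ha j; omega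
    rw [this, inv_pow, inv_pow, inv_inv]
    have := pow_ne_zero (a j) q_ne
    field_simp
  have h2 := qt_inj (fun i => N - κ i) (fun i => N - l i) (fun i => (i : ℕ)) Fin.val_injective (by
    rw [key κ hκ, key l hl, h])
  funext i
  have h3 := congrFun h2 i
  have := hκ i
  have := hl i
  omega

end FinalPart
end Stmt9

open Stmt9

theorem stmt_9 (n : ℕ) (κ : Fin n → ℕ) (hκ : Antitone κ)
    (T₁ : ℕ → P n →ₗ[K] P n) (hT₁ : IsDL n t T₁)
    (P₁ : P n) (hP₁ : IsSymMac n q t T₁ κ P₁)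
    (T₂ : ℕ → P n →ₗ[K] P n) (hT₂ : IsDL n t⁻¹ T₂)
    (P₂ : P n) (hP₂ : IsSymMac n q⁻¹ t⁻¹ T₂ κ P₂) :
    P₂ = P₁ := by
  obtain ⟨s1, c1, -, e1⟩ := hP₁
  obtain ⟨s2, c2, -, e2⟩ := hP₂
  have hD := isD_Y (L := FractionRing (P n)) q t t_ne hT₁
  have hD' := isD_Y (L := FractionRing (P n)) q⁻¹ t⁻¹ (inv_ne_zero t_ne) hT₂
  set D := ∑ i : Fin n, Yop n q t T₁ i with hDd
  set D' := ∑ i : Fin n, Yop n q⁻¹ t⁻¹ T₂ i with hDd'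
  have hcomm := D_comm q_ne t_ne q_ne1 t_ne1 q_ne_t hD hD' s1
  have hP0 : P₁ ≠ 0 := by
    intro h
    rw [h, coeff_zero] at c1
    exact zero_ne_one c1
  set a := coeff (Finsupp.equivFunOnFinite.symm κ) (D' P₁) with ha
  have hsm : ∀ (b : K) {f : P n}, f.IsSymmetric → (b • f).IsSymmetric := fun b f hf σ => by
    rw [map_smul, hf σ]
  have h1 : D' P₁ - a • P₁ = 0 := by
    refine uniq t_ne EI_qt hD ((D_sym hD' s1).sub (hsm a s1)) κ ?_ ?_
    · rw [map_sub, hcomm, e1, map_smul, map_smul, e1, smul_sub, smul_comm a]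
    · rw [coeff_sub, coeff_smul, c1, ← ha]; simp
  have h2 : D' P₁ = a • P₁ := sub_eq_zero.1 h1
  have h3 := eigen (inv_ne_zero t_ne) hD' s1 hP0 a h2
  have h4 := EI_qt _ _ (eigen t_ne hD s1 hP0 _ e1)
  rw [← h4] at h3
  rw [h3] at h2
  refine sub_eq_zero.1 (uniq (inv_ne_zero t_ne) EI_qt_inv hD' (s2.sub s1) κ ?_ ?_)
  · rw [map_sub, e2, h2, smul_sub]
  · rw [coeff_sub, c1, c2, sub_self]
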